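/- Let n ≥ 5 be an integer. Define Φ(ρ) = (2/ρ)·arctan(ρ/√(n−4)) and Φ̂(ρ) = Φ(ρ) + ρ·Φ′(ρ) for ρ > 0. Then for every ρ > 0 the static self-similar system holds: Φ″(ρ) + ((n−1)/ρ)·Φ′(ρ) − 2·Φ̂(ρ) − ρ·Φ̂′(ρ) + ((n−3)/(2ρ³))·(2ρ·Φ(ρ) − sin(2ρ·Φ(ρ))) = 0. That is, the pair (Φ, Φ̂) is a static (τ-independent) solution of the corotational wave maps system in similarity variables. -/

import Mathlib

/-!
In terms of the angle `F = ρ Φ` one has `Φ̂ = F′`, `Φ̂′ = F″`, and the terms of the system in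
which `F` appears linearly and undifferentiated cancel, so that its left-hand side is `1 / ρ` times
that of the scalar equation
`(1 - ρ²) F″ + ((n - 3) / ρ - 2ρ) F′ - (n - 3) / (2ρ²) sin (2F) = 0`.
For `F = 2 arctan (ρ / s)` every term is a rational function of `ρ`, and the numerator vanishes
identically exactly when `s² = n - 4`.
-/

open Filter Topology

section AngleDerivatives

variable {𝕜 : Type*} [NontriviallyNormedField 𝕜] {F F₁ Φ Φhat : 𝕜 → 𝕜} {F₂ ρ : 𝕜}

theorem hasDerivAt_div_id {f : 𝕜 → 𝕜} {f' x : 𝕜} (hf : HasDerivAt f f' x) (hx : x ≠ 0) :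
    HasDerivAt (fun y ↦ f y / y) ((f' - f x / x) / x) x := by
  refine (hf.fun_div (hasDerivAt_id' x) hx).congr_deriv ?_
  field_simp

theorem eventually_deriv_eq_of_eq_angle_div (hρ : ρ ≠ 0)
    (hF : ∀ᶠ r in 𝓝 ρ, HasDerivAt F (F₁ r) r) (hΦ : ∀ᶠ r in 𝓝 ρ, Φ r = F r / r) :
    ∀ᶠ r in 𝓝 ρ, deriv Φ r = (F₁ r - F r / r) / r := by
  filter_upwards [hF, hΦ.eventually_nhds, eventually_ne_nhds hρ] with r hFr hΦr hr
  exact ((hasDerivAt_div_id hFr hr).congr_of_eventuallyEq hΦr).deriv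

theorem deriv_deriv_eq_of_eq_angle_div (hρ : ρ ≠ 0)
    (hF : ∀ᶠ r in 𝓝 ρ, HasDerivAt F (F₁ r) r) (hF₁ : HasDerivAt F₁ F₂ ρ)
    (hΦ : ∀ᶠ r in 𝓝 ρ, Φ r = F r / r) :
    deriv (deriv Φ) ρ = (F₂ - 2 * ((F₁ ρ - F ρ / ρ) / ρ)) / ρ := by
  have hderiv := eventually_deriv_eq_of_eq_angle_div hρ hF hΦ
  have hdiff := hF₁.fun_sub (hasDerivAt_div_id hF.self_of_nhds hρ)
  rw [EventuallyEq.deriv_eq hderiv, (hasDerivAt_div_id hdiff hρ).deriv]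
  ring

theorem eventually_eq_deriv_angle (hρ : ρ ≠ 0)
    (hF : ∀ᶠ r in 𝓝 ρ, HasDerivAt F (F₁ r) r) (hΦ : ∀ᶠ r in 𝓝 ρ, Φ r = F r / r)
    (hΦhat : ∀ᶠ r in 𝓝 ρ, Φhat r = Φ r + r * deriv Φ r) :
    ∀ᶠ r in 𝓝 ρ, Φhat r = F₁ r := by
  filter_upwards [eventually_deriv_eq_of_eq_angle_div hρ hF hΦ, hΦ, hΦhat,
    eventually_ne_nhds hρ] with r hderiv hΦr hΦhatr hr
  rw [hΦhatr, hΦr, hderiv]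
  field_simp
  ring

end AngleDerivatives

theorem static_system_eq_angle_equation_div {F F₁ Φ Φhat : ℝ → ℝ} {F₂ ρ : ℝ} (d : ℝ) (hρ : ρ ≠ 0)
    (hF : ∀ᶠ r in 𝓝 ρ, HasDerivAt F (F₁ r) r) (hF₁ : HasDerivAt F₁ F₂ ρ)
    (hΦ : ∀ᶠ r in 𝓝 ρ, Φ r = F r / r)
    (hΦhat : ∀ᶠ r in 𝓝 ρ, Φhat r = Φ r + r * deriv Φ r) :
    deriv (deriv Φ) ρ + (d - 1) / ρ * deriv Φ ρ - 2 * Φhat ρ - ρ * deriv Φhat ρ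
        + (d - 3) / (2 * ρ ^ 3) * (2 * ρ * Φ ρ - Real.sin (2 * ρ * Φ ρ)) =
      ((1 - ρ ^ 2) * F₂ + ((d - 3) / ρ - 2 * ρ) * F₁ ρ
        - (d - 3) / (2 * ρ ^ 2) * Real.sin (2 * F ρ)) / ρ := by
  have hΦhat_eq := eventually_eq_deriv_angle hρ hF hΦ hΦhat
  have hderiv_Φhat : deriv Φhat ρ = F₂ := by rw [EventuallyEq.deriv_eq hΦhat_eq, hF₁.deriv]
  have hangle : 2 * ρ * Φ ρ = 2 * F ρ := by
    rw [hΦ.self_of_nhds]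
    field_simp
  rw [hangle, hderiv_Φhat, hΦhat_eq.self_of_nhds, deriv_deriv_eq_of_eq_angle_div hρ hF hF₁ hΦ,
    (eventually_deriv_eq_of_eq_angle_div hρ hF hΦ).self_of_nhds]
  field_simp
  ring

theorem sin_two_mul_arctan (x : ℝ) : Real.sin (2 * Real.arctan x) = 2 * x / (1 + x ^ 2) := by
  have hsin : Real.sin (Real.arctan x) = x * Real.cos (Real.arctan x) := by
    simpa only [Real.tan_arctan] using (Real.tan_mul_cos (Real.cos_arctan_pos x).ne').symm
  calc Real.sin (2 * Real.arctan x) = 2 * x * Real.cos (Real.arctan x) ^ 2 := by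
        rw [Real.sin_two_mul, hsin]; ring
    _ = 2 * x / (1 + x ^ 2) := by rw [Real.cos_sq_arctan]; ring

theorem cos_two_mul_arctan (x : ℝ) :
    Real.cos (2 * Real.arctan x) = (1 - x ^ 2) / (1 + x ^ 2) := by
  have hx : 1 + x ^ 2 ≠ 0 := by positivity
  rw [Real.cos_two_mul, Real.cos_sq_arctan]
  field_simp
  ring

/-- The angle `ρ Φ(ρ)` of the self-similar blowup profile with length scale `s`; the wave maps
profile in dimension `n` has `s = √(n - 4)`. -/
noncomputable def blowupAngle (s r : ℝ) : ℝ :=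
  2 * Real.arctan (r / s)

section BlowupAngle

variable {s : ℝ}

theorem hasDerivAt_blowupAngle (hs : s ≠ 0) (r : ℝ) :
    HasDerivAt (blowupAngle s) (2 * s / (s ^ 2 + r ^ 2)) r := by
  refine (((hasDerivAt_id' r).div_const s).arctan.const_mul 2).congr_deriv ?_
  have hden : s ^ 2 + r ^ 2 ≠ 0 := by positivity
  field_simp

theorem hasDerivAt_deriv_blowupAngle (hs : s ≠ 0) (r : ℝ) :
    HasDerivAt (fun x ↦ 2 * s / (s ^ 2 + x ^ 2)) (-(4 * s * r) / (s ^ 2 + r ^ 2) ^ 2) r := by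
  have hden : s ^ 2 + r ^ 2 ≠ 0 := by positivity
  refine ((hasDerivAt_const r (2 * s)).fun_div
    ((hasDerivAt_pow 2 r).const_add (s ^ 2)) hden).congr_deriv ?_
  ring

theorem sin_two_mul_blowupAngle (hs : s ≠ 0) (r : ℝ) :
    Real.sin (2 * blowupAngle s r) = 4 * s * r * (s ^ 2 - r ^ 2) / (s ^ 2 + r ^ 2) ^ 2 := by
  have hden : s ^ 2 + r ^ 2 ≠ 0 := by positivity
  rw [blowupAngle, Real.sin_two_mul, sin_two_mul_arctan, cos_two_mul_arctan]
  field_simp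
  ring

theorem angle_equation_blowupAngle (hs : s ≠ 0) {d ρ : ℝ} (hd : s ^ 2 = d - 4) (hρ : ρ ≠ 0) :
    (1 - ρ ^ 2) * (-(4 * s * ρ) / (s ^ 2 + ρ ^ 2) ^ 2)
      + ((d - 3) / ρ - 2 * ρ) * (2 * s / (s ^ 2 + ρ ^ 2))
      - (d - 3) / (2 * ρ ^ 2) * Real.sin (2 * blowupAngle s ρ) = 0 := by
  have hden : s ^ 2 + ρ ^ 2 ≠ 0 := by positivity
  obtain rfl : d = s ^ 2 + 4 := by linarith
  rw [sin_two_mul_blowupAngle hs]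
  field_simp
  ring

end BlowupAngle

theorem stmt_4_general (d : ℝ) (hd : 4 < d) (Φ Φhat : ℝ → ℝ)
    (hΦ : ∀ ρ : ℝ, 0 < ρ → Φ ρ = 2 / ρ * Real.arctan (ρ / Real.sqrt (d - 4)))
    (hΦhat : ∀ ρ : ℝ, 0 < ρ → Φhat ρ = Φ ρ + ρ * deriv Φ ρ)
    (ρ : ℝ) (hρ : 0 < ρ) :
    deriv (deriv Φ) ρ + (d - 1) / ρ * deriv Φ ρ - 2 * Φhat ρ - ρ * deriv Φhat ρ
      + (d - 3) / (2 * ρ ^ 3) * (2 * ρ * Φ ρ - Real.sin (2 * ρ * Φ ρ)) = 0 := by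
  have hs : √(d - 4) ≠ 0 := (Real.sqrt_pos.mpr (sub_pos.mpr hd)).ne'
  have hs_sq : √(d - 4) ^ 2 = d - 4 := Real.sq_sqrt (sub_pos.mpr hd).le
  have hΦ_eq : ∀ᶠ r in 𝓝 ρ, Φ r = blowupAngle (√(d - 4)) r / r := by
    filter_upwards [eventually_gt_nhds hρ] with r hr
    rw [hΦ r hr, blowupAngle]
    ring
  rw [static_system_eq_angle_equation_div d hρ.ne' (.of_forall (hasDerivAt_blowupAngle hs))
    (hasDerivAt_deriv_blowupAngle hs ρ) hΦ_eq ((eventually_gt_nhds hρ).mono hΦhat),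
    angle_equation_blowupAngle hs hs_sq hρ.ne', zero_div]

/-- the pair `(Φ, Φ̂)`, with `Φ(ρ) = (2/ρ)·arctan(ρ/√(n−4))` and
`Φ̂ = Φ + ρΦ′`, is a static solution of the corotational wave maps system in
similarity variables:
`Φ″ + ((n−1)/ρ)Φ′ − 2Φ̂ − ρΦ̂′ + ((n−3)/(2ρ³))(2ρΦ − sin(2ρΦ)) = 0`. -/
theorem stmt_4 (n : ℕ) (hn : 5 ≤ n)
    (Φ Φhat : ℝ → ℝ)
    (hΦ : ∀ ρ : ℝ, 0 < ρ → Φ ρ = 2 / ρ * Real.arctan (ρ / Real.sqrt ((n : ℝ) - 4)))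
    (hΦhat : ∀ ρ : ℝ, 0 < ρ → Φhat ρ = Φ ρ + ρ * deriv Φ ρ)
    (ρ : ℝ) (hρ : 0 < ρ) :
    deriv (deriv Φ) ρ + ((n : ℝ) - 1) / ρ * deriv Φ ρ
      - 2 * Φhat ρ - ρ * deriv Φhat ρ
      + ((n : ℝ) - 3) / (2 * ρ ^ 3) * (2 * ρ * Φ ρ - Real.sin (2 * ρ * Φ ρ)) = 0 :=
  stmt_4_general n (by exact_mod_cast hn) Φ Φhat hΦ hΦhat ρ hρ
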